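/- Let (E,𝒞,r) be a semimatroid and ≺ a linear order on E. Then (−1)^{r(𝒞)} · χ(𝒞;−1) equals the number of central sets X ∈ 𝒞 that contain no broken circuit of 𝒞 with respect to ≺. -/

import Mathlib

open scoped Classical

/-- A semimatroid on a finite ground set `E`: a nonempty, subset-closed collection `C`
of "central" subsets of `E`, together with a rank function `r` satisfying (SR1)-(SR5). -/
structure Semimatroid (E : Type*) [DecidableEq E] [Fintype E] where
  C : Finset (Finset E)
  r : Finset E → ℕ
  C_nonempty : C.Nonempty
  mem_of_subset : ∀ ⦃X Y : Finset E⦄, X ∈ C → Y ⊆ X → Y ∈ C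
  r_le_card : ∀ ⦃X : Finset E⦄, X ∈ C → r X ≤ X.card
  r_mono : ∀ ⦃X Y : Finset E⦄, X ∈ C → Y ∈ C → X ⊆ Y → r X ≤ r Y
  submodular : ∀ ⦃X Y : Finset E⦄, X ∈ C → Y ∈ C → X ∪ Y ∈ C →
    r (X ∩ Y) + r (X ∪ Y) ≤ r X + r Y
  union_mem : ∀ ⦃X Y : Finset E⦄, X ∈ C → Y ∈ C → r X = r (X ∩ Y) → X ∪ Y ∈ C
  augment : ∀ ⦃X Y : Finset E⦄, X ∈ C → Y ∈ C → r X < r Y →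
    ∃ e ∈ Y \ X, insert e X ∈ C

namespace Semimatroid

variable {E : Type*} [DecidableEq E] [Fintype E] (S : Semimatroid E)

/-- The rank `r(𝒞)` of the semimatroid: the common rank of the maximal central sets. -/
def rank : ℕ := S.C.sup S.r

/-- The closure of a central set `X`:
`cl X = {e ∈ E : X ∪ {e} ∈ 𝒞 and r (X ∪ {e}) = r X}`. -/
def cl (X : Finset E) : Finset E :=
  Finset.univ.filter fun e => insert e X ∈ S.C ∧ S.r (insert e X) = S.r X

/-- The flats of the semimatroid: central sets `X` with `cl X = X`. -/
def flats : Finset (Finset E) := S.C.filter fun X => S.cl X = X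

/-- The characteristic polynomial `χ(𝒞;t) = Σ_{X ∈ 𝒞} (−1)^{|X|} t^{r(𝒞)−r(X)}`. -/
noncomputable def charPoly : Polynomial ℤ :=
  ∑ A ∈ S.C, (-1 : Polynomial ℤ) ^ A.card * Polynomial.X ^ (S.rank - S.r A)

end Semimatroid

namespace Semimatroid

variable {E : Type*} [DecidableEq E] [Fintype E] (S : Semimatroid E)

/-- A circuit of a semimatroid: a minimal dependent central set. -/
def IsCircuit (K : Finset E) : Prop :=
  K ∈ S.C ∧ S.r K < K.card ∧ ∀ Y ⊂ K, S.r Y = Y.card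

variable [LinearOrder E]

/-- A broken circuit w.r.t. a linear order on `E`: a circuit with its least element removed. -/
def IsBrokenCircuit (B : Finset E) : Prop :=
  ∃ K, S.IsCircuit K ∧ ∃ e ∈ K, (∀ x ∈ K, e ≤ x) ∧ B = K.erase e

end Semimatroid

/-!
Call `e` active in `X` when `X ∪ {e}` contains a circuit with least element `e`. Then `X` contains a
broken circuit exactly when some element is active in `X`, and toggling the greatest active element
of `X` changes the parity of `|X|` but neither the centrality nor the rank of `X`: an active element
lies in the closure of `X ∖ {e}`. Whether `e` is active in `X` only depends on the elements of `X`
above `e`, so the greatest active element survives the toggle, which is therefore a sign-reversing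
involution on the central sets containing a broken circuit. The remaining central sets contain no
circuit, so their rank is their cardinality; this is Whitney's broken circuit formula for the
characteristic polynomial, and at `-1` all its terms have the sign `(-1) ^ r(𝒞)`.
-/

namespace Semimatroid

open Finset
open scoped symmDiff

section SymmDiffSingleton

variable {α : Type*} [DecidableEq α] {s : Finset α} {a : α}

theorem symmDiff_singleton_of_mem (ha : a ∈ s) : s ∆ {a} = s.erase a := by
  rw [symmDiff_of_ge (singleton_subset_iff.2 ha), sdiff_singleton_eq_erase]

theorem symmDiff_singleton_of_notMem (ha : a ∉ s) : s ∆ {a} = insert a s := by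
  rw [(disjoint_singleton_right.2 ha).symmDiff_eq_sup, sup_eq_union, union_comm, insert_eq]

theorem neg_one_pow_card_symmDiff_singleton {R : Type*} [Ring R]
    (s : Finset α) (a : α) : (-1 : R) ^ (s ∆ {a}).card = -(-1) ^ s.card := by
  by_cases ha : a ∈ s
  · rw [symmDiff_singleton_of_mem ha, ← card_erase_add_one ha, pow_succ, mul_neg_one, neg_neg]
  · rw [symmDiff_singleton_of_notMem ha, card_insert_of_notMem ha, pow_succ, mul_neg_one]

end SymmDiffSingleton

section Closure

variable {E : Type*} [DecidableEq E] [Fintype E] {S : Semimatroid E} {K X Y : Finset E} {e : E}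

theorem r_le_rank (hX : X ∈ S.C) : S.r X ≤ S.rank :=
  le_sup (f := S.r) hX

theorem mem_cl : e ∈ S.cl X ↔ insert e X ∈ S.C ∧ S.r (insert e X) = S.r X := by
  simp only [cl, mem_filter_univ]

theorem cl_subset_cl (hY : Y ∈ S.C) (hXY : X ⊆ Y) : S.cl X ⊆ S.cl Y := by
  intro e he
  rw [mem_cl] at he ⊢
  obtain ⟨hmem, hr⟩ := he
  by_cases heY : e ∈ Y
  · simp only [insert_eq_of_mem heY, hY, true_and]
  have hinter : insert e X ∩ Y = X := by
    rw [insert_inter_of_notMem heY, inter_eq_left.2 hXY]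
  have hunion : insert e X ∪ Y = insert e Y := by
    rw [insert_union, union_eq_right.2 hXY]
  have hins := S.union_mem hmem hY (by rw [hinter, hr])
  have hsub := S.submodular hmem hY hins
  rw [hinter, hunion, hr] at hsub
  rw [hunion] at hins
  exact ⟨hins, (Nat.le_of_add_le_add_left hsub).antisymm (S.r_mono hY hins (subset_insert e Y))⟩

theorem IsCircuit.mem_cl_erase (hK : S.IsCircuit K) (he : e ∈ K) : e ∈ S.cl (K.erase e) := by
  obtain ⟨hKC, hdep, hmin⟩ := hK
  rw [mem_cl, insert_erase he]
  have hle := S.r_mono (S.mem_of_subset hKC (erase_subset e K)) hKC (erase_subset e K)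
  have herase := hmin _ (erase_ssubset he)
  have hcard := card_erase_add_one he
  exact ⟨hKC, by lia⟩

theorem exists_isCircuit_subset (hX : X ∈ S.C) (hr : S.r X < X.card) :
    ∃ K ⊆ X, S.IsCircuit K := by
  obtain ⟨K, hKX, hK⟩ := exists_minimal_le_of_wellFoundedLT (fun Y => S.r Y < Y.card) X hr
  have hKC := S.mem_of_subset hX hKX
  exact ⟨K, hKX, hKC, hK.prop, fun Y hY =>
    (S.r_le_card (S.mem_of_subset hKC hY.subset)).antisymm (not_lt.1 (hK.not_prop_of_lt hY))⟩

theorem symmDiff_singleton_mem (hX : X ∈ S.C) (he : e ∈ S.cl (X.erase e)) : X ∆ {e} ∈ S.C := by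
  by_cases heX : e ∈ X
  · rw [symmDiff_singleton_of_mem heX]
    exact S.mem_of_subset hX (erase_subset e X)
  · rw [erase_eq_of_notMem heX] at he
    rw [symmDiff_singleton_of_notMem heX]
    exact (mem_cl.1 he).1

theorem r_symmDiff_singleton (he : e ∈ S.cl (X.erase e)) : S.r (X ∆ {e}) = S.r X := by
  have hr := (mem_cl.1 he).2
  by_cases heX : e ∈ X
  · rw [symmDiff_singleton_of_mem heX, ← hr, insert_erase heX]
  · rw [erase_eq_of_notMem heX] at hr
    rw [symmDiff_singleton_of_notMem heX, hr]

end Closure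

section BrokenCircuits

variable {E : Type*} [Fintype E] [LinearOrder E] (S : Semimatroid E) {X Y : Finset E} {e : E}

/-- The active elements of `X`: the elements `e` that are least in some circuit contained in
`X ∪ {e}`. They may lie inside or outside `X`. -/
def activeElements (X : Finset E) : Set E :=
  {e | ∃ K, S.IsCircuit K ∧ IsLeast (K : Set E) e ∧ K ⊆ insert e X}

/-- The broken circuit complex: the central sets that contain no broken circuit. -/
noncomputable def nbcSets : Finset (Finset E) :=
  S.C.filter fun X => ∀ B : Finset E, S.IsBrokenCircuit B → ¬ B ⊆ X

variable {S}

theorem mem_nbcSets : X ∈ S.nbcSets ↔ X ∈ S.C ∧ S.activeElements X = ∅ := by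
  rw [nbcSets, mem_filter, Set.eq_empty_iff_forall_notMem]
  refine and_congr_right fun _ => ⟨?_, ?_⟩
  · rintro h e ⟨K, hK, ⟨he, hmin⟩, hKX⟩
    exact h _ ⟨K, hK, e, he, hmin, rfl⟩ (subset_insert_iff.1 hKX)
  · rintro h _ ⟨K, hK, e, he, hmin, rfl⟩ hKX
    exact h e ⟨K, hK, ⟨he, hmin⟩, subset_insert_iff.2 hKX⟩

theorem r_eq_card_of_mem_nbcSets (hX : X ∈ S.nbcSets) : S.r X = X.card := by
  obtain ⟨hXC, hact⟩ := mem_nbcSets.1 hX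
  refine (S.r_le_card hXC).eq_of_not_lt fun hlt => ?_
  obtain ⟨K, hKX, hK⟩ := exists_isCircuit_subset hXC hlt
  have hne : K.Nonempty := card_pos.1 (Nat.zero_lt_of_lt hK.2.1)
  have hmem : K.min' hne ∈ S.activeElements X :=
    ⟨K, hK, K.isLeast_min' hne, hKX.trans (subset_insert _ X)⟩
  exact hact.le hmem

theorem card_le_rank_of_mem_nbcSets (hX : X ∈ S.nbcSets) : X.card ≤ S.rank :=
  r_eq_card_of_mem_nbcSets hX ▸ r_le_rank (mem_nbcSets.1 hX).1

theorem mem_cl_erase_of_mem_activeElements (hX : X ∈ S.C) (he : e ∈ S.activeElements X) :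
    e ∈ S.cl (X.erase e) := by
  obtain ⟨K, hK, ⟨heK, -⟩, hKX⟩ := he
  have hsub : K.erase e ⊆ X.erase e := by grind
  exact cl_subset_cl (S.mem_of_subset hX (erase_subset e X)) hsub (hK.mem_cl_erase heK)

theorem mem_activeElements_congr (h : ∀ x, e < x → (x ∈ X ↔ x ∈ Y)) :
    e ∈ S.activeElements X ↔ e ∈ S.activeElements Y := by
  refine exists_congr fun K => and_congr_right fun _ => and_congr_right fun ⟨_, hmin⟩ => ?_
  refine forall₂_congr fun x hx => ?_
  rcases (hmin hx).eq_or_lt with rfl | hlt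
  · simp only [mem_insert_self]
  · simp only [mem_insert, h x hlt]

theorem mem_activeElements_symmDiff_singleton {a : E} (hae : a ≤ e) :
    e ∈ S.activeElements (X ∆ {a}) ↔ e ∈ S.activeElements X :=
  mem_activeElements_congr fun x hx => by
    simp only [mem_symmDiff, mem_singleton, (hae.trans_lt hx).ne', not_false_eq_true, and_true,
      false_and, or_false]

theorem isGreatest_activeElements_symmDiff_singleton (he : IsGreatest (S.activeElements X) e) :
    IsGreatest (S.activeElements (X ∆ {e})) e := by
  refine ⟨(mem_activeElements_symmDiff_singleton le_rfl).2 he.1, fun a ha => ?_⟩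
  by_contra! hlt
  exact hlt.not_ge (he.2 ((mem_activeElements_symmDiff_singleton hlt.le).1 ha))

theorem symmDiff_singleton_mem_sdiff_nbcSets (hX : X ∈ S.C) (he : e ∈ S.activeElements X) :
    X ∆ {e} ∈ S.C \ S.nbcSets := by
  have he' := (mem_activeElements_symmDiff_singleton le_rfl).2 he
  exact mem_sdiff.2 ⟨symmDiff_singleton_mem hX (mem_cl_erase_of_mem_activeElements hX he),
    fun h => (mem_nbcSets.1 h).2.le he'⟩

variable (S)

theorem sum_sdiff_nbcSets_neg_one_pow_card_mul_r {R : Type*} [Ring R] (f : ℕ → R) :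
    ∑ X ∈ S.C \ S.nbcSets, (-1) ^ X.card * f (S.r X) = 0 := by
  have hmem {X} (hX : X ∈ S.C \ S.nbcSets) : X ∈ S.C := (mem_sdiff.1 hX).1
  have hexists : ∀ X ∈ S.C \ S.nbcSets, ∃ e, IsGreatest (S.activeElements X) e := by
    intro X hX
    have hne : (S.activeElements X).Nonempty := by
      rw [Set.nonempty_iff_ne_empty]
      exact fun h => (mem_sdiff.1 hX).2 (mem_nbcSets.2 ⟨hmem hX, h⟩)
    exact Set.exists_max_image _ id (Set.toFinite _) hne
  choose m hm using hexists
  have htoggle X (hX : X ∈ S.C \ S.nbcSets) : X ∆ {m X hX} ∈ S.C \ S.nbcSets :=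
    symmDiff_singleton_mem_sdiff_nbcSets (hmem hX) (hm X hX).1
  refine sum_involution (fun X hX => X ∆ {m X hX}) (fun X hX => ?_) (fun X hX _ => ?_) htoggle
    fun X hX => ?_
  · have hcl := mem_cl_erase_of_mem_activeElements (hmem hX) (hm X hX).1
    rw [neg_one_pow_card_symmDiff_singleton, r_symmDiff_singleton hcl, neg_mul, add_neg_cancel]
  · exact symmDiff_eq_left.not.2 (singleton_ne_empty _)
  · have hm_toggle : m (X ∆ {m X hX}) (htoggle X hX) = m X hX :=
      (hm _ _).unique (isGreatest_activeElements_symmDiff_singleton (hm X hX))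
    rw [hm_toggle, symmDiff_symmDiff_cancel_right]

theorem sum_neg_one_pow_card_mul_r_eq_sum_nbcSets {R : Type*} [Ring R] (f : ℕ → R) :
    ∑ X ∈ S.C, (-1) ^ X.card * f (S.r X) = ∑ X ∈ S.nbcSets, (-1) ^ X.card * f X.card := by
  have hsub : S.nbcSets ⊆ S.C := filter_subset _ _
  rw [← sum_sdiff hsub, sum_sdiff_nbcSets_neg_one_pow_card_mul_r, zero_add]
  exact sum_congr rfl fun X hX => by rw [r_eq_card_of_mem_nbcSets hX]

theorem charPoly_eq_sum_nbcSets :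
    S.charPoly = ∑ X ∈ S.nbcSets, (-1) ^ X.card * Polynomial.X ^ (S.rank - X.card) :=
  S.sum_neg_one_pow_card_mul_r_eq_sum_nbcSets fun k => Polynomial.X ^ (S.rank - k)

end BrokenCircuits

end Semimatroid

/-- `(−1)^{r(𝒞)} χ(𝒞;−1)` equals the number of central sets
containing no broken circuit with respect to a linear order on `E`. -/
theorem Semimatroid.charPoly_eval_neg_one
    {E : Type*} [Fintype E] [LinearOrder E] (S : Semimatroid E) :
    (-1 : ℤ) ^ S.rank * S.charPoly.eval (-1) =
      ((S.C.filter fun X : Finset E =>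
        ∀ B : Finset E, S.IsBrokenCircuit B → ¬ B ⊆ X).card : ℤ) := by
  change _ = (S.nbcSets.card : ℤ)
  have hterm : ∀ X ∈ S.nbcSets,
      (-1 : ℤ) ^ X.card * (-1) ^ (S.rank - X.card) = (-1) ^ S.rank := fun X hX => by
    rw [← pow_add, Nat.add_sub_cancel' (card_le_rank_of_mem_nbcSets hX)]
  have heval : S.charPoly.eval (-1) = S.nbcSets.card * (-1) ^ S.rank := by
    simp only [charPoly_eq_sum_nbcSets, Polynomial.eval_finsetSum, Polynomial.eval_mul,
      Polynomial.eval_pow, Polynomial.eval_neg, Polynomial.eval_one, Polynomial.eval_X,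
      Finset.sum_congr rfl hterm, Finset.sum_const, nsmul_eq_mul]
  rw [heval, mul_left_comm, ← mul_pow, neg_one_mul, neg_neg, one_pow, mul_one]
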